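/- There exists a constant C > 0, depending only on n, such that the following Caccioppoli-type inequality holds: let w : Ω₁ → ℝ be C² on Ω₁, extending continuously to the closure of Ω₁ with w = 0 on Γ₁⁺ ∪ Γ₁⁻, satisfying Δw(x) = −Δũ(x) pointwise in Ω₁, and with |w|², |∇w|², |Δũ|² integrable on Ω₁. Then for every x₀ = (x₀', x₀,n) ∈ Ω_{1/2} and all 0 < t < s with |x₀'| + s < 1/2: ∫_{Ω̂_t(x₀)} |∇w|² dx ≤ (C/(s − t)²) ∫_{Ω̂_s(x₀)} |w|² dx + C·(s − t)² ∫_{Ω̂_s(x₀)} |Δũ|² dx. -/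

import Mathlib

open MeasureTheory Metric Finset

noncomputable section

/-- `ℝ^{n-1}`, the horizontal (tangential) variables `x'`. -/
abbrev Ep (n : ℕ) := EuclideanSpace ℝ (Fin (n - 1))

/-- `ℝ^n = ℝ^{n-1} × ℝ`, points written `x = (x', x_n)`. -/
abbrev Efull (n : ℕ) := Ep n × ℝ

/-- The narrow region `Ω_r`. -/
def Omega (n : ℕ) (ε : ℝ) (h1 h2 : Ep n → ℝ) (r : ℝ) : Set (Efull n) :=
  {x | ‖x.1‖ < r ∧ -ε/2 + h2 x.1 < x.2 ∧ x.2 < ε/2 + h1 x.1}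

/-- Top boundary `Γ_r⁺`. -/
def Gammap (n : ℕ) (ε : ℝ) (h1 : Ep n → ℝ) (r : ℝ) : Set (Efull n) :=
  {x | ‖x.1‖ ≤ r ∧ x.2 = ε/2 + h1 x.1}

/-- Bottom boundary `Γ_r⁻`. -/
def Gammam (n : ℕ) (ε : ℝ) (h2 : Ep n → ℝ) (r : ℝ) : Set (Efull n) :=
  {x | ‖x.1‖ ≤ r ∧ x.2 = -ε/2 + h2 x.1}

/-- `Ω̂_s(x₀) = {x ∈ Ω_{1/2} : |x' - x₀'| < s}`. -/
def OmegaHat (n : ℕ) (ε : ℝ) (h1 h2 : Ep n → ℝ) (x0 : Efull n) (s : ℝ) : Set (Efull n) :=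
  {x | x ∈ Omega n ε h1 h2 (1/2) ∧ ‖x.1 - x0.1‖ < s}

/-- The `n` coordinate directions of `ℝ^{n-1} × ℝ`: the first `n-1` are the horizontal
Euclidean basis vectors, the last is the vertical direction. -/
def dir (n : ℕ) (α : Fin n) : Efull n :=
  if h : (α : ℕ) < n - 1 then (EuclideanSpace.single (⟨(α : ℕ), h⟩ : Fin (n - 1)) 1, (0:ℝ))
  else (0, 1)

/-- Tangential direction `e_α` for `α ∈ {1, …, n-1}`. -/
def tang (n : ℕ) (α : Fin (n - 1)) : Efull n := (EuclideanSpace.single α 1, (0:ℝ))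

/-- Vertical direction `e_n`. -/
def vert (n : ℕ) : Efull n := (0, 1)

/-- Pointwise Laplacian `Δu = Σ_α ∂_α∂_α u`. -/
def lapl (n : ℕ) (u : Efull n → ℝ) (x : Efull n) : ℝ :=
  ∑ α : Fin n, fderiv ℝ (fun y => fderiv ℝ u y (dir n α)) x (dir n α)

/-- The auxiliary function `ū(x', x_n) = (x_n - h2(x') + ε/2)/(ε + h1(x') - h2(x'))`. -/
def ubar (n : ℕ) (ε : ℝ) (h1 h2 : Ep n → ℝ) (x : Efull n) : ℝ :=
  (x.2 - h2 x.1 + ε/2) / (ε + h1 x.1 - h2 x.1)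

/-- The auxiliary function `ũ = φ(x')·ū + ψ(x')·(1 - ū)`. -/
def util (n : ℕ) (ε : ℝ) (h1 h2 φ ψ : Ep n → ℝ) (x : Efull n) : ℝ :=
  φ x.1 * ubar n ε h1 h2 x + ψ x.1 * (1 - ubar n ε h1 h2 x)

/-- `C²`-norm on the closed unit ball: `sup_{|x'| ≤ 1} (|f| + |∇f| + |∇²f|)`. -/
def C2norm {F : Type*} [NormedAddCommGroup F] [NormedSpace ℝ F] (n : ℕ)
    (f : Ep n → F) : ℝ :=
  ⨆ y : closedBall (0 : Ep n) 1,
    (‖f (y : Ep n)‖ + ‖fderiv ℝ f (y : Ep n)‖ + ‖fderiv ℝ (fderiv ℝ f) (y : Ep n)‖)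

/-- `C²(S)`-norm of a function on `ℝ^n`. -/
def C2normOn (n : ℕ) (S : Set (Efull n)) (f : Efull n → ℝ) : ℝ :=
  ⨆ y : S,
    (‖f (y : Efull n)‖ + ‖fderiv ℝ f (y : Efull n)‖ + ‖fderiv ℝ (fderiv ℝ f) (y : Efull n)‖)

/-- `‖∇f‖_∞ = sup_{|x'| ≤ 1} |∇f(x')|`. -/
def gradSup {F : Type*} [NormedAddCommGroup F] [NormedSpace ℝ F] (n : ℕ) (f : Ep n → F) : ℝ :=
  ⨆ y : closedBall (0 : Ep n) 1, ‖fderiv ℝ f (y : Ep n)‖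

/-- `‖∇²f‖_∞ = sup_{|x'| ≤ 1} |∇²f(x')|`. -/
def hessSup {F : Type*} [NormedAddCommGroup F] [NormedSpace ℝ F] (n : ℕ) (f : Ep n → F) : ℝ :=
  ⨆ y : closedBall (0 : Ep n) 1, ‖fderiv ℝ (fderiv ℝ f) (y : Ep n)‖

/-- The geometric hypotheses on `h1, h2`: `C²` on the closed unit ball, the two graphs
do not touch, flatness at the origin, strict convexity of the gap, and `C²`-bound `κ1`. -/
def HGeom (n : ℕ) (ε κ0 κ1 : ℝ) (h1 h2 : Ep n → ℝ) : Prop :=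
  ContDiffOn ℝ 2 h1 (closedBall 0 1) ∧ ContDiffOn ℝ 2 h2 (closedBall 0 1) ∧
  (∀ y : Ep n, ‖y‖ ≤ 1 → -ε/2 + h2 y < ε/2 + h1 y) ∧
  h1 0 = 0 ∧ h2 0 = 0 ∧ fderiv ℝ h1 0 = 0 ∧ fderiv ℝ h2 0 = 0 ∧
  (∀ v : Ep n, κ0 * ‖v‖^2 ≤ fderiv ℝ (fderiv ℝ (fun y => h1 y - h2 y)) 0 v v) ∧
  C2norm n h1 + C2norm n h2 ≤ κ1

/-- Comparability `(ε + |x'|²)/C₀ ≤ δ(x') ≤ C₀ (ε + |x'|²)`. -/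
def DeltaComp (n : ℕ) (ε C₀ : ℝ) (h1 h2 : Ep n → ℝ) : Prop :=
  ∀ y : Ep n, ‖y‖ ≤ 1 →
    (ε + ‖y‖^2) / C₀ ≤ ε + h1 y - h2 y ∧ ε + h1 y - h2 y ≤ C₀ * (ε + ‖y‖^2)

/-- Hypotheses on the coefficients: `C²`-regularity with total `C²(Ω₁)`-norm at most `κ2`,
boundedness `|A| ≤ Λ`, and the weak ellipticity (Legendre) condition with constant `λ`. -/
def CoeffHyp (n N : ℕ) (ε lam Lam κ2 : ℝ) (h1 h2 : Ep n → ℝ)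
    (A : Fin n → Fin n → Fin N → Fin N → Efull n → ℝ)
    (B : Fin n → Fin N → Fin N → Efull n → ℝ)
    (Cc : Fin n → Fin N → Fin N → Efull n → ℝ)
    (Dc : Fin N → Fin N → Efull n → ℝ) : Prop :=
  (∀ α β i j, ContDiffOn ℝ 2 (A α β i j) (Omega n ε h1 h2 1)) ∧
  (∀ α i j, ContDiffOn ℝ 2 (B α i j) (Omega n ε h1 h2 1)) ∧
  (∀ β i j, ContDiffOn ℝ 2 (Cc β i j) (Omega n ε h1 h2 1)) ∧
  (∀ i j, ContDiffOn ℝ 2 (Dc i j) (Omega n ε h1 h2 1)) ∧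
  ((∑ α : Fin n, ∑ β : Fin n, ∑ i : Fin N, ∑ j : Fin N,
      C2normOn n (Omega n ε h1 h2 1) (A α β i j)) +
   (∑ α : Fin n, ∑ i : Fin N, ∑ j : Fin N, C2normOn n (Omega n ε h1 h2 1) (B α i j)) +
   (∑ β : Fin n, ∑ i : Fin N, ∑ j : Fin N, C2normOn n (Omega n ε h1 h2 1) (Cc β i j)) +
   (∑ i : Fin N, ∑ j : Fin N, C2normOn n (Omega n ε h1 h2 1) (Dc i j)) ≤ κ2) ∧
  (∀ α β i j, ∀ x ∈ Omega n ε h1 h2 1, |A α β i j x| ≤ Lam) ∧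
  (∀ ξ : Efull n → EuclideanSpace ℝ (Fin N), ContDiff ℝ (⊤ : ℕ∞) ξ →
    HasCompactSupport ξ → tsupport ξ ⊆ Omega n ε h1 h2 1 →
    lam * ∫ x in Omega n ε h1 h2 1, ‖fderiv ℝ ξ x‖^2 ≤
      ∫ x in Omega n ε h1 h2 1,
        ∑ α : Fin n, ∑ β : Fin n, ∑ i : Fin N, ∑ j : Fin N,
          A α β i j x * fderiv ℝ ξ x (dir n α) i * fderiv ℝ ξ x (dir n β) j)

/-- `u` is a weak solution of
`∂_α(A^{αβ}_{ij} ∂_β u^j + B^α_{ij} u^j) + C^β_{ij} ∂_β u^j + D_{ij} u^j = 0` in `Ω₁`. -/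
def WeakSol (n N : ℕ) (ε : ℝ) (h1 h2 : Ep n → ℝ)
    (A : Fin n → Fin n → Fin N → Fin N → Efull n → ℝ)
    (B : Fin n → Fin N → Fin N → Efull n → ℝ)
    (Cc : Fin n → Fin N → Fin N → Efull n → ℝ)
    (Dc : Fin N → Fin N → Efull n → ℝ)
    (u : Efull n → EuclideanSpace ℝ (Fin N)) : Prop :=
  ContDiffOn ℝ 1 u (Omega n ε h1 h2 1) ∧
  IntegrableOn (fun x => ‖u x‖^2 + ‖fderiv ℝ u x‖^2) (Omega n ε h1 h2 1) ∧
  ∀ ζ : Efull n → EuclideanSpace ℝ (Fin N), ContDiff ℝ (⊤ : ℕ∞) ζ →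
    HasCompactSupport ζ → tsupport ζ ⊆ Omega n ε h1 h2 1 →
    (∫ x in Omega n ε h1 h2 1,
      ((∑ α : Fin n, ∑ i : Fin N,
          ((∑ β : Fin n, ∑ j : Fin N, A α β i j x * fderiv ℝ u x (dir n β) j) +
            ∑ j : Fin N, B α i j x * u x j) * fderiv ℝ ζ x (dir n α) i) -
        ∑ i : Fin N,
          ((∑ β : Fin n, ∑ j : Fin N, Cc β i j x * fderiv ℝ u x (dir n β) j) +
            ∑ j : Fin N, Dc i j x * u x j) * ζ x i)) = 0

/-- `u` attains the boundary values `(φ, ψ)` on `Γ₁⁺` and `Γ₁⁻`. -/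
def AttainsBV {F : Type*} [NormedAddCommGroup F] [NormedSpace ℝ F] (n : ℕ) (ε : ℝ)
    (h1 h2 : Ep n → ℝ) (u : Efull n → F) (φ ψ : Ep n → F) : Prop :=
  ContinuousOn u (Omega n ε h1 h2 1 ∪ Gammap n ε h1 1 ∪ Gammam n ε h2 1) ∧
  (∀ y : Ep n, ‖y‖ ≤ 1 → u (y, ε/2 + h1 y) = φ y ∧ u (y, -ε/2 + h2 y) = ψ y)

/-- `u` is a harmonic function on `Ω₁` with boundary values `φ` on `Γ₁⁺` and `ψ` on `Γ₁⁻`. -/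
def HarmBV (n : ℕ) (ε : ℝ) (h1 h2 : Ep n → ℝ) (u : Efull n → ℝ) (φ ψ : Ep n → ℝ) : Prop :=
  ContDiffOn ℝ 2 u (Omega n ε h1 h2 1) ∧
  (∀ x ∈ Omega n ε h1 h2 1, lapl n u x = 0) ∧
  IntegrableOn (fun x => ‖u x‖^2 + ‖fderiv ℝ u x‖^2) (Omega n ε h1 h2 1) ∧
  AttainsBV n ε h1 h2 u φ ψ

/-!
The inequality comes from testing `Δw` with `η² w θ(w)`, where `η` is a radial cutoff in the
horizontal variables and `θ` a cutoff in the values of `w` that vanishes near `0`. Since `w = 0` on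
the two graphs, the test function is supported in a compact subset of `Ω₁`, so integration by parts
needs no regularity up to the boundary. Differentiating `θ(w)` costs only `η² w θ'(w) |∇w|²`, which
is nonnegative and can be dropped; the remaining terms are handled by Young's inequality, with
parameter `s - t` for the term containing `Δw`. Finally `θ` increases to the indicator of
`{w ≠ 0}`, Fatou's lemma passes to the limit, and nothing is lost because `∇w = 0` almost everywhere
on `{w = 0}`.

`ℝ^{n-1} × ℝ` carries the sup norm, so `‖fderiv ℝ w x‖` is the dual norm and not the Euclidean
length of the gradient; its square is at most `n` times the sum of the squared partial derivatives.
-/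

open Filter Set Topology

/-! ### Integrability -/

lemma integrable_and_integral_le_of_tendsto_ae {α : Type*} [MeasurableSpace α] {μ : Measure α}
    {F : ℕ → α → ℝ} {f : α → ℝ} {B : ℝ} (hint : ∀ N, Integrable (F N) μ)
    (hnonneg : ∀ N, 0 ≤ᵐ[μ] F N) (hlim : ∀ᵐ x ∂μ, Tendsto (fun N => F N x) atTop (𝓝 (f x)))
    (hB : ∀ N, ∫ x, F N x ∂μ ≤ B) : Integrable f μ ∧ ∫ x, f x ∂μ ≤ B := by
  have hmeas : AEStronglyMeasurable f μ :=
    aestronglyMeasurable_of_tendsto_ae _ (fun N => (hint N).aestronglyMeasurable) hlim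
  have hf : 0 ≤ᵐ[μ] f := by
    filter_upwards [hlim, ae_all_iff.2 hnonneg] with x hx hFx using ge_of_tendsto' hx hFx
  have hfatou : ∫⁻ x, ENNReal.ofReal (f x) ∂μ ≤ ENNReal.ofReal B :=
    calc ∫⁻ x, ENNReal.ofReal (f x) ∂μ
        = ∫⁻ x, liminf (fun N => ENNReal.ofReal (F N x)) atTop ∂μ := lintegral_congr_ae <| by
          filter_upwards [hlim] with x hx using (ENNReal.tendsto_ofReal hx).liminf_eq.symm
      _ ≤ liminf (fun N => ∫⁻ x, ENNReal.ofReal (F N x) ∂μ) atTop :=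
          lintegral_liminf_le' fun N => (hint N).aemeasurable.ennreal_ofReal
      _ ≤ ENNReal.ofReal B := liminf_le_of_frequently_le' <| Frequently.of_forall fun N => by
          rw [← ofReal_integral_eq_lintegral_ofReal (hint N) (hnonneg N)]
          exact ENNReal.ofReal_le_ofReal (hB N)
  have hB0 : 0 ≤ B := (integral_nonneg_of_ae (hnonneg 0)).trans (hB 0)
  refine ⟨(lintegral_ofReal_ne_top_iff_integrable hmeas hf).1
    (hfatou.trans_lt ENNReal.ofReal_lt_top).ne, ?_⟩
  rw [integral_eq_lintegral_of_nonneg_ae hf hmeas]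
  exact ENNReal.toReal_le_of_le_ofReal hB0 hfatou

lemma integrableOn_of_continuousOn_of_forall_sdiff_eq_zero {X : Type*} [TopologicalSpace X]
    [T2Space X] [MeasurableSpace X] [OpensMeasurableSpace X] {μ : Measure X}
    [IsFiniteMeasureOnCompacts μ] {U K : Set X} {u : X → ℝ} (hU : IsOpen U) (hK : IsCompact K)
    (hKU : K ⊆ U) (hu : ContinuousOn u U) (hu0 : ∀ x ∈ U \ K, u x = 0) : IntegrableOn u U μ :=
  ((hu.mono hKU).integrableOn_compact hK).of_forall_sdiff_eq_zero hU.measurableSet hu0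

/-! ### Level and radial cutoffs -/

/-- A smooth cutoff in the value `τ` of a function: it vanishes for `|τ| ≤ δ`, equals `1` for
`2δ ≤ |τ|`, and is nondecreasing in `|τ|`, for `0 < δ`. -/
def levelCutoff (δ τ : ℝ) : ℝ := Real.smoothTransition ((τ / δ) ^ 2 - 1)

lemma levelCutoff_nonneg (δ τ : ℝ) : 0 ≤ levelCutoff δ τ := Real.smoothTransition.nonneg _

lemma levelCutoff_le_one (δ τ : ℝ) : levelCutoff δ τ ≤ 1 := Real.smoothTransition.le_one _

lemma levelCutoff_eq_zero {δ τ : ℝ} (hτ : |τ| ≤ δ) : levelCutoff δ τ = 0 := by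
  refine Real.smoothTransition.zero_of_nonpos (sub_nonpos.2 ?_)
  rw [sq_le_one_iff_abs_le_one, abs_div, abs_of_nonneg ((abs_nonneg τ).trans hτ)]
  exact div_le_one_of_le₀ hτ ((abs_nonneg τ).trans hτ)

lemma levelCutoff_eq_one {δ τ : ℝ} (hδ : 0 < δ) (hτ : 2 * δ ≤ |τ|) : levelCutoff δ τ = 1 := by
  refine Real.smoothTransition.one_of_one_le ?_
  have hquot : 2 ≤ |τ / δ| := by rwa [abs_div, abs_of_pos hδ, le_div_iff₀ hδ]
  nlinarith [sq_abs (τ / δ)]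

lemma contDiff_levelCutoff (δ : ℝ) : ContDiff ℝ 1 (levelCutoff δ) :=
  (Real.smoothTransition.contDiff (n := 1)).comp (by fun_prop)

lemma mul_deriv_levelCutoff_nonneg (δ τ : ℝ) : 0 ≤ τ * deriv (levelCutoff δ) τ := by
  have hinner : HasDerivAt (fun τ : ℝ => (τ / δ) ^ 2 - 1) (2 * (τ / δ) * (1 / δ)) τ := by
    simpa using (((hasDerivAt_id τ).div_const δ).pow 2).sub_const 1
  have hstep : DifferentiableAt ℝ Real.smoothTransition ((τ / δ) ^ 2 - 1) :=
    (Real.smoothTransition.contDiff (n := 1)).differentiable (by norm_num) _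
  have hderiv : deriv (levelCutoff δ) τ =
      deriv Real.smoothTransition ((τ / δ) ^ 2 - 1) * (2 * (τ / δ) * (1 / δ)) :=
    (hstep.hasDerivAt.comp τ hinner).deriv
  have hmono := Real.smoothTransition.monotone.deriv_nonneg (x := (τ / δ) ^ 2 - 1)
  calc 0 ≤ deriv Real.smoothTransition ((τ / δ) ^ 2 - 1) * (2 * (τ / δ) ^ 2) := by positivity
    _ = τ * deriv (levelCutoff δ) τ := by rw [hderiv]; ring

lemma tendsto_levelCutoff_one_div {τ : ℝ} (hτ : τ ≠ 0) :
    Tendsto (fun N : ℕ => levelCutoff (1 / ((N : ℝ) + 1)) τ) atTop (𝓝 1) := by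
  have hsmall : ∀ᶠ N : ℕ in atTop, 1 / ((N : ℝ) + 1) < |τ| / 2 :=
    tendsto_one_div_add_atTop_nhds_zero_nat.eventually_lt_const (by positivity)
  refine tendsto_const_nhds.congr' ?_
  filter_upwards [hsmall] with N hN
  exact (levelCutoff_eq_one (by positivity) (by linarith)).symm

lemma deriv_smoothTransition_eq_zero_of_notMem_Icc {x : ℝ} (hx : x ∉ Icc (0 : ℝ) 1) :
    deriv Real.smoothTransition x = 0 := by
  rcases lt_or_ge x 0 with hneg | hnonneg
  · refine IsLocalMin.deriv_eq_zero (Eventually.of_forall fun y => ?_)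
    rw [Real.smoothTransition.zero_of_nonpos hneg.le]
    exact Real.smoothTransition.nonneg y
  · have hone : 1 ≤ x := le_of_not_ge fun h => hx ⟨hnonneg, h⟩
    refine IsLocalMax.deriv_eq_zero (Eventually.of_forall fun y => ?_)
    rw [Real.smoothTransition.one_of_one_le hone]
    exact Real.smoothTransition.le_one y

lemma exists_abs_deriv_smoothTransition_le : ∃ M, ∀ x, |deriv Real.smoothTransition x| ≤ M := by
  have hcont : Continuous (deriv Real.smoothTransition) :=
    (Real.smoothTransition.contDiff (n := 1)).continuous_deriv le_rfl
  obtain ⟨M, hM⟩ := (isCompact_Icc (a := (0 : ℝ)) (b := 1)).exists_bound_of_continuousOn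
    hcont.continuousOn
  refine ⟨M, fun x => ?_⟩
  by_cases hx : x ∈ Icc (0 : ℝ) 1
  · exact hM x hx
  · rw [deriv_smoothTransition_eq_zero_of_notMem_Icc hx, abs_zero]
    exact (norm_nonneg _).trans (hM 0 (by simp))

section RadialCutoff

variable {H : Type*} [NormedAddCommGroup H]

/-- A smooth cutoff equal to `1` on `closedBall a t` and to `0` off `ball a s`, for `0 ≤ t < s`.
It is a function of `‖x - a‖ ^ 2` so that it is smooth at the centre. -/
def radialCutoff (a : H) (t s : ℝ) (x : H) : ℝ :=
  Real.smoothTransition ((s ^ 2 - ‖x - a‖ ^ 2) / (s ^ 2 - t ^ 2))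

variable {a : H} {t s : ℝ}

lemma radialCutoff_nonneg (x : H) : 0 ≤ radialCutoff a t s x := Real.smoothTransition.nonneg _

lemma radialCutoff_le_one (x : H) : radialCutoff a t s x ≤ 1 := Real.smoothTransition.le_one _

lemma radialCutoff_eq_one (ht : 0 ≤ t) (hts : t < s) {x : H} (hx : ‖x - a‖ ≤ t) :
    radialCutoff a t s x = 1 := by
  refine Real.smoothTransition.one_of_one_le ?_
  rw [one_le_div (by nlinarith)]
  gcongr

lemma radialCutoff_eq_zero (ht : 0 ≤ t) (hts : t < s) {x : H} (hx : s ≤ ‖x - a‖) :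
    radialCutoff a t s x = 0 := by
  have hs : 0 ≤ s := ht.trans hts.le
  refine Real.smoothTransition.zero_of_nonpos (div_nonpos_of_nonpos_of_nonneg ?_ ?_)
  · exact sub_nonpos.2 (by gcongr)
  · exact sub_nonneg.2 (by gcongr)

variable [InnerProductSpace ℝ H]

lemma contDiff_radialCutoff : ContDiff ℝ 1 (radialCutoff a t s) :=
  (Real.smoothTransition.contDiff (n := 1)).comp
    ((contDiff_const.sub ((contDiff_id.sub contDiff_const).norm_sq ℝ)).div_const _)

lemma fderiv_radialCutoff (x : H) :
    fderiv ℝ (radialCutoff a t s) x =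
      (deriv Real.smoothTransition ((s ^ 2 - ‖x - a‖ ^ 2) / (s ^ 2 - t ^ 2)) *
        (-2 / (s ^ 2 - t ^ 2))) • innerSL ℝ (x - a) := by
  have hnorm : HasFDerivAt (fun y : H => ‖y - a‖ ^ 2) (2 • innerSL ℝ (x - a)) x := by
    simpa using ((hasFDerivAt_id x).sub_const a).norm_sq
  have hquot := (hnorm.const_sub (s ^ 2)).mul_const (s ^ 2 - t ^ 2)⁻¹
  have hstep := (Real.smoothTransition.contDiff (n := 1)).differentiable (by norm_num)
    ((s ^ 2 - ‖x - a‖ ^ 2) * (s ^ 2 - t ^ 2)⁻¹)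
  have hcomp := (hstep.hasDerivAt.comp_hasFDerivAt x hquot).fderiv
  simp only [← div_eq_mul_inv] at hcomp
  exact hcomp.trans (by module)

lemma norm_fderiv_radialCutoff_le {M : ℝ} (hM : ∀ x, |deriv Real.smoothTransition x| ≤ M)
    (ht : 0 ≤ t) (hts : t < s) (x : H) :
    ‖fderiv ℝ (radialCutoff a t s) x‖ ≤ 2 * M / (s - t) := by
  have hs : 0 < s := ht.trans_lt hts
  have hst : 0 < s - t := sub_pos.2 hts
  have hsq : 0 < s ^ 2 - t ^ 2 := by nlinarith
  have hM0 : 0 ≤ M := (abs_nonneg _).trans (hM 0)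
  rcases le_total s ‖x - a‖ with hx | hx
  · have hmin : IsLocalMin (radialCutoff a t s) x := Eventually.of_forall fun y => by
      rw [radialCutoff_eq_zero ht hts hx]
      exact radialCutoff_nonneg y
    rw [hmin.fderiv_eq_zero, norm_zero]
    positivity
  · rw [fderiv_radialCutoff, norm_smul, innerSL_apply_norm, norm_mul, norm_div, norm_neg,
      Real.norm_of_nonneg hsq.le, Real.norm_two]
    calc ‖deriv Real.smoothTransition ((s ^ 2 - ‖x - a‖ ^ 2) / (s ^ 2 - t ^ 2))‖ *
          (2 / (s ^ 2 - t ^ 2)) * ‖x - a‖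
        ≤ M * (2 / (s ^ 2 - t ^ 2)) * s := by gcongr; exact hM _
      _ = 2 * M / (s - t) * (s / (s + t)) := by
          rw [show s ^ 2 - t ^ 2 = (s - t) * (s + t) by ring]
          field_simp
      _ ≤ 2 * M / (s - t) :=
          mul_le_of_le_one_right (by positivity) (div_le_one_of_le₀ (by linarith) (by linarith))

end RadialCutoff

/-! ### Gradients and Laplacians along a finite family of directions -/

section Frame

variable {E : Type*} [NormedAddCommGroup E] [NormedSpace ℝ E] {ι : Type*} [Fintype ι]
  {e : ι → E} {U K : Set E} {u v w η : E → ℝ} {x : E}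

/-- The pairing `∇u · ∇v = ∑ᵢ ∂ᵢu ∂ᵢv` of two gradients, computed along the directions `e i`. -/
def gradInner (e : ι → E) (u v : E → ℝ) (x : E) : ℝ :=
  ∑ i, fderiv ℝ u x (e i) * fderiv ℝ v x (e i)

/-- The operator `∑ᵢ ∂ᵢ∂ᵢ` along the directions `e i`; it is the Laplacian `lapl n` when `e` is the
coordinate frame `dir n`. -/
def frameLaplacian (e : ι → E) (u : E → ℝ) (x : E) : ℝ :=
  ∑ i, fderiv ℝ (fun y => fderiv ℝ u y (e i)) x (e i)

lemma gradInner_self_nonneg (e : ι → E) (u : E → ℝ) (x : E) : 0 ≤ gradInner e u u x :=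
  Finset.sum_nonneg fun _ _ => mul_self_nonneg _

lemma gradInner_self_le_card_mul_norm_fderiv_sq {e : ι → E} (he : ∀ i, ‖e i‖ ≤ 1) (u : E → ℝ)
    (x : E) : gradInner e u u x ≤ Fintype.card ι * ‖fderiv ℝ u x‖ ^ 2 := by
  calc gradInner e u u x ≤ ∑ _i : ι, ‖fderiv ℝ u x‖ ^ 2 := Finset.sum_le_sum fun i _ => by
        rw [← sq, ← sq_abs]
        gcongr
        exact (fderiv ℝ u x).unit_le_opNorm _ (he i)
    _ = Fintype.card ι * ‖fderiv ℝ u x‖ ^ 2 := by simp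

lemma neg_le_two_mul_mul_gradInner (e : ι → E) (w η : E → ℝ) (x : E) :
    -(1 / 2 * (η x ^ 2 * gradInner e w w x) + 2 * (w x ^ 2 * gradInner e η η x)) ≤
      2 * (η x * w x * gradInner e η w x) := by
  simp only [gradInner, Finset.mul_sum, ← Finset.sum_add_distrib, ← Finset.sum_neg_distrib]
  refine Finset.sum_le_sum fun i _ => ?_
  nlinarith [sq_nonneg (2 * w x * fderiv ℝ η x (e i) + η x * fderiv ℝ w x (e i))]

lemma contDiffOn_fderiv_apply (hU : IsOpen U) (hw : ContDiffOn ℝ 2 w U) (d : E) :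
    ContDiffOn ℝ 1 (fun y => fderiv ℝ w y d) U :=
  (hw.fderiv_of_isOpen hU (by norm_num)).clm_apply contDiffOn_const

lemma continuousOn_gradInner (hU : IsOpen U) (hu : ContDiffOn ℝ 1 u U) (hv : ContDiffOn ℝ 1 v U) :
    ContinuousOn (gradInner e u v) U :=
  continuousOn_finsetSum _ fun _ _ =>
    ((hu.continuousOn_fderiv_of_isOpen hU le_rfl).clm_apply continuousOn_const).mul
      ((hv.continuousOn_fderiv_of_isOpen hU le_rfl).clm_apply continuousOn_const)

lemma continuousOn_frameLaplacian (hU : IsOpen U) (hw : ContDiffOn ℝ 2 w U) :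
    ContinuousOn (frameLaplacian e w) U :=
  continuousOn_finsetSum _ fun i _ =>
    ((contDiffOn_fderiv_apply hU hw (e i)).continuousOn_fderiv_of_isOpen hU le_rfl).clm_apply
      continuousOn_const

lemma fderiv_eq_zero_of_forall_sdiff_eq_zero (hU : IsOpen U) (hK : IsClosed K)
    (hu : ∀ y ∈ U \ K, u y = 0) (hx : x ∈ U \ K) : fderiv ℝ u x = 0 := by
  have hzero : u =ᶠ[𝓝 x] fun _ => 0 := by
    filter_upwards [(hU.sdiff hK).mem_nhds hx] with y hy using hu y hy
  rw [hzero.fderiv_eq, fderiv_const_apply]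

lemma gradInner_sq_mul_mul_comp {θ : ℝ → ℝ} (hη : DifferentiableAt ℝ η x)
    (hw : DifferentiableAt ℝ w x) (hθ : DifferentiableAt ℝ θ (w x)) :
    gradInner e (fun y => η y ^ 2 * (w y * θ (w y))) w x =
      θ (w x) * (η x ^ 2 * gradInner e w w x + 2 * (η x * w x * gradInner e η w x)) +
        η x ^ 2 * (w x * deriv θ (w x)) * gradInner e w w x := by
  have hderiv := ((hη.hasFDerivAt.pow 2).mul
    (hw.hasFDerivAt.mul (hθ.hasDerivAt.comp_hasFDerivAt x hw.hasFDerivAt))).fderiv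
  have hpartial (i : ι) : fderiv ℝ (fun y => η y ^ 2 * (w y * θ (w y))) x (e i) =
      η x ^ 2 * (w x * (deriv θ (w x) * fderiv ℝ w x (e i)) + θ (w x) * fderiv ℝ w x (e i)) +
        w x * θ (w x) * (2 * η x * fderiv ℝ η x (e i)) := by
    refine (congrArg (fun L => L (e i)) hderiv).trans ?_
    simp [mul_add]
  simp only [gradInner, hpartial, Finset.mul_sum, ← Finset.sum_add_distrib]
  exact Finset.sum_congr rfl fun i _ => by ring

/-- The integrand that controls `½ η² |∇w|²` in the Caccioppoli inequality with cutoff `η`: Young's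
inequality turns the cross term into `2 w² |∇η|²`, and `η² |w Δw|` comes from the equation. -/
def cutoffError (e : ι → E) (w η : E → ℝ) (x : E) : ℝ :=
  2 * (w x ^ 2 * gradInner e η η x) + η x ^ 2 * |w x * frameLaplacian e w x|

lemma cutoffError_nonneg (e : ι → E) (w η : E → ℝ) (x : E) : 0 ≤ cutoffError e w η x := by
  have := gradInner_self_nonneg e η x
  unfold cutoffError
  positivity

lemma continuousOn_cutoffError (hU : IsOpen U) (hw : ContDiffOn ℝ 2 w U) (hη : ContDiffOn ℝ 1 η U) :
    ContinuousOn (cutoffError e w η) U :=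
  (continuousOn_const.mul ((hw.continuousOn.pow 2).mul (continuousOn_gradInner hU hη hη))).add
    ((hη.continuousOn.pow 2).mul
      (hw.continuousOn.mul (continuousOn_frameLaplacian hU hw)).abs)

lemma cutoffError_eq_zero (hmin : IsLocalMin η x) (hηx : η x = 0) : cutoffError e w η x = 0 := by
  simp [cutoffError, gradInner, hmin.fderiv_eq_zero, hηx]

lemma two_mul_cutoffError_le {B d : ℝ} (hd : 0 < d) (hη0 : 0 ≤ η x) (hη1 : η x ≤ 1)
    (hgrad : gradInner e η η x ≤ B) :
    2 * cutoffError e w η x ≤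
      (4 * B + 1 / d ^ 2) * w x ^ 2 + d ^ 2 * frameLaplacian e w x ^ 2 := by
  have hcut : w x ^ 2 * gradInner e η η x ≤ w x ^ 2 * B := by gcongr
  have hyoung : 2 * |w x * frameLaplacian e w x| ≤
      1 / d ^ 2 * w x ^ 2 + d ^ 2 * frameLaplacian e w x ^ 2 := by
    have h := two_mul_le_add_sq (|w x| / d) (d * |frameLaplacian e w x|)
    rw [div_pow, mul_pow, sq_abs, sq_abs] at h
    calc 2 * |w x * frameLaplacian e w x| = 2 * (|w x| / d) * (d * |frameLaplacian e w x|) := by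
          rw [abs_mul]; field_simp
      _ ≤ w x ^ 2 / d ^ 2 + d ^ 2 * frameLaplacian e w x ^ 2 := h
      _ = 1 / d ^ 2 * w x ^ 2 + d ^ 2 * frameLaplacian e w x ^ 2 := by ring
  have hsource : η x ^ 2 * |w x * frameLaplacian e w x| ≤ |w x * frameLaplacian e w x| :=
    mul_le_of_le_one_left (abs_nonneg _) (pow_le_one₀ hη0 hη1)
  unfold cutoffError
  linarith

/-- Besides the terms of the energy estimate, testing `Δw` with `η² w θ(w)` produces
`η² w θ'(w) |∇w|²`, which has a favourable sign and is dropped; Young's inequality absorbs half of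
`η² θ(w) |∇w|²`. -/
lemma half_mul_sub_le_gradInner_add_mul_frameLaplacian {θ : ℝ → ℝ} (hη : DifferentiableAt ℝ η x)
    (hw : DifferentiableAt ℝ w x) (hθ : DifferentiableAt ℝ θ (w x)) (hθ0 : 0 ≤ θ (w x))
    (hθ1 : θ (w x) ≤ 1) (hθ' : 0 ≤ w x * deriv θ (w x)) :
    1 / 2 * (θ (w x) * (η x ^ 2 * gradInner e w w x)) - cutoffError e w η x ≤
      gradInner e (fun y => η y ^ 2 * (w y * θ (w y))) w x +
        η x ^ 2 * (w x * θ (w x)) * frameLaplacian e w x := by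
  have hdropped : 0 ≤ η x ^ 2 * (w x * deriv θ (w x)) * gradInner e w w x :=
    mul_nonneg (mul_nonneg (sq_nonneg _) hθ') (gradInner_self_nonneg e w x)
  have hcross := mul_le_mul_of_nonneg_left (neg_le_two_mul_mul_gradInner e w η x) hθ0
  have hsource := mul_le_mul_of_nonneg_left (neg_abs_le (w x * frameLaplacian e w x))
    (mul_nonneg hθ0 (sq_nonneg (η x)))
  have herror := mul_le_of_le_one_left (cutoffError_nonneg e w η x) hθ1
  rw [gradInner_sq_mul_mul_comp hη hw hθ]
  unfold cutoffError at herror ⊢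
  linarith

/-! ### Integration by parts -/

variable [MeasurableSpace E] [BorelSpace E] [FiniteDimensional ℝ E] {μ : Measure E}
  [μ.IsAddHaarMeasure]

lemma integral_fderiv_apply_eq_zero (hu : ContDiff ℝ 1 u) (hsupp : HasCompactSupport u) (d : E) :
    ∫ x, fderiv ℝ u x d ∂μ = 0 := by
  have hderiv : Integrable (fun x => fderiv ℝ u x d) μ :=
    ((hu.continuous_fderiv one_ne_zero).clm_apply
      continuous_const).integrable_of_hasCompactSupport (hsupp.fderiv_apply ℝ d)
  simpa using integral_mul_fderiv_eq_neg_fderiv_mul_of_integrable (μ := μ)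
    (f := fun _ => (1 : ℝ)) (g := u) (v := d) (by simp) (by simpa using hderiv)
    (by simpa using hu.continuous.integrable_of_hasCompactSupport hsupp)
    (fun _ _ => differentiableAt_const _) (fun x _ => hu.differentiable one_ne_zero x)

lemma setIntegral_fderiv_apply_eq_zero (hU : IsOpen U) (hK : IsCompact K) (hKU : K ⊆ U)
    (hu : ContDiffOn ℝ 1 u U) (hu0 : ∀ x ∈ U \ K, u x = 0) (d : E) :
    ∫ x in U, fderiv ℝ u x d ∂μ = 0 := by
  have hzero : ∀ x ∉ K, U.indicator u x = 0 := fun x hx =>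
    indicator_apply_eq_zero.2 fun hxU => hu0 x ⟨hxU, hx⟩
  have hin : ∀ x ∈ U, U.indicator u =ᶠ[𝓝 x] u := fun x hx =>
    eqOn_indicator.eventuallyEq_of_mem (hU.mem_nhds hx)
  have hout : ∀ x ∉ U, U.indicator u =ᶠ[𝓝 x] fun _ => 0 := fun x hx =>
    mem_of_superset (hK.isClosed.isOpen_compl.mem_nhds fun h => hx (hKU h)) hzero
  have hsmooth : ContDiff ℝ 1 (U.indicator u) := contDiff_iff_contDiffAt.2 fun x => by
    by_cases hx : x ∈ U
    · exact (hu.contDiffAt (hU.mem_nhds hx)).congr_of_eventuallyEq (hin x hx)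
    · exact contDiffAt_const.congr_of_eventuallyEq (hout x hx)
  calc ∫ x in U, fderiv ℝ u x d ∂μ = ∫ x in U, fderiv ℝ (U.indicator u) x d ∂μ :=
        setIntegral_congr_fun hU.measurableSet fun x hx => by
          simp only [(hin x hx).fderiv_eq]
    _ = ∫ x, fderiv ℝ (U.indicator u) x d ∂μ :=
        setIntegral_eq_integral_of_forall_compl_eq_zero fun x hx => by
          simp [(hout x hx).fderiv_eq]
    _ = 0 := integral_fderiv_apply_eq_zero hsmooth (HasCompactSupport.intro hK hzero) d

lemma setIntegral_gradInner_add_mul_frameLaplacian (hU : IsOpen U) (hK : IsCompact K)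
    (hKU : K ⊆ U) (hu : ContDiffOn ℝ 1 u U) (hu0 : ∀ x ∈ U \ K, u x = 0)
    (hw : ContDiffOn ℝ 2 w U) :
    ∫ x in U, (gradInner e u w x + u x * frameLaplacian e w x) ∂μ = 0 := by
  have hflux (i : ι) : ContDiffOn ℝ 1 (fun y => u y * fderiv ℝ w y (e i)) U :=
    hu.mul (contDiffOn_fderiv_apply hU hw (e i))
  have hflux0 (i : ι) : ∀ x ∈ U \ K, u x * fderiv ℝ w x (e i) = 0 := fun x hx => by
    rw [hu0 x hx, zero_mul]
  have hexpand : ∀ x ∈ U, gradInner e u w x + u x * frameLaplacian e w x =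
      ∑ i, fderiv ℝ (fun y => u y * fderiv ℝ w y (e i)) x (e i) := fun x hx => by
    have hux := (hu.contDiffAt (hU.mem_nhds hx)).differentiableAt one_ne_zero
    have hwx (i : ι) := ((contDiffOn_fderiv_apply hU hw (e i)).contDiffAt
      (hU.mem_nhds hx)).differentiableAt one_ne_zero
    simp only [gradInner, frameLaplacian, Finset.mul_sum, ← Finset.sum_add_distrib]
    refine Finset.sum_congr rfl fun i _ => ?_
    rw [fderiv_fun_mul hux (hwx i)]
    simp [add_comm, mul_comm]
  rw [setIntegral_congr_fun hU.measurableSet hexpand, integral_finsetSum]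
  · exact Finset.sum_eq_zero fun i _ =>
      setIntegral_fderiv_apply_eq_zero hU hK hKU (hflux i) (hflux0 i) (e i)
  · exact fun i _ => integrableOn_of_continuousOn_of_forall_sdiff_eq_zero hU hK hKU
      (((hflux i).continuousOn_fderiv_of_isOpen hU le_rfl).clm_apply continuousOn_const)
      fun x hx => by
        rw [fderiv_eq_zero_of_forall_sdiff_eq_zero hU hK.isClosed (hflux0 i) hx,
          zero_apply]

/-! ### The Caccioppoli inequality -/

lemma setIntegral_comp_mul_sq_mul_gradInner_le (hU : IsOpen U) (hK : IsCompact K) (hKU : K ⊆ U)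
    (hw : ContDiffOn ℝ 2 w U) (hη : ContDiffOn ℝ 1 η U) {θ : ℝ → ℝ} (hθ : ContDiff ℝ 1 θ)
    (hθ0 : ∀ τ, 0 ≤ θ τ) (hθ1 : ∀ τ, θ τ ≤ 1) (hθ' : ∀ τ, 0 ≤ τ * deriv θ τ)
    (hsupp : ∀ x ∈ U \ K, η x = 0 ∨ θ (w x) = 0)
    (herror : IntegrableOn (cutoffError e w η) U μ) :
    IntegrableOn (fun x => θ (w x) * (η x ^ 2 * gradInner e w w x)) U μ ∧
      ∫ x in U, θ (w x) * (η x ^ 2 * gradInner e w w x) ∂μ ≤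
        2 * ∫ x in U, cutoffError e w η x ∂μ := by
  have hw1 : ContDiffOn ℝ 1 w U := hw.of_le (by norm_num)
  have hθw : ContDiffOn ℝ 1 (fun x => θ (w x)) U := hθ.comp_contDiffOn hw1
  have htest : ContDiffOn ℝ 1 (fun x => η x ^ 2 * (w x * θ (w x))) U :=
    (hη.pow 2).mul (hw1.mul hθw)
  have htest0 : ∀ x ∈ U \ K, η x ^ 2 * (w x * θ (w x)) = 0 := fun x hx => by
    rcases hsupp x hx with h | h <;> simp [h]
  have henergy : IntegrableOn (fun x => θ (w x) * (η x ^ 2 * gradInner e w w x)) U μ := by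
    refine integrableOn_of_continuousOn_of_forall_sdiff_eq_zero hU hK hKU ?_ fun x hx => ?_
    · exact hθw.continuousOn.mul ((hη.continuousOn.pow 2).mul (continuousOn_gradInner hU hw1 hw1))
    · rcases hsupp x hx with h | h <;> simp [h]
  have hgreen : IntegrableOn (fun x => gradInner e (fun y => η y ^ 2 * (w y * θ (w y))) w x +
      η x ^ 2 * (w x * θ (w x)) * frameLaplacian e w x) U μ := by
    refine integrableOn_of_continuousOn_of_forall_sdiff_eq_zero hU hK hKU ?_ fun x hx => ?_
    · exact (continuousOn_gradInner hU htest hw1).add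
        (htest.continuousOn.mul (continuousOn_frameLaplacian hU hw))
    · simp [gradInner, fderiv_eq_zero_of_forall_sdiff_eq_zero hU hK.isClosed htest0 hx,
        htest0 x hx]
  have hle := setIntegral_mono_on
    ((henergy.const_mul (1 / 2)).sub' herror) hgreen
    hU.measurableSet fun x hx => half_mul_sub_le_gradInner_add_mul_frameLaplacian
      ((hη.contDiffAt (hU.mem_nhds hx)).differentiableAt one_ne_zero)
      ((hw1.contDiffAt (hU.mem_nhds hx)).differentiableAt one_ne_zero)
      (hθ.differentiable one_ne_zero _) (hθ0 _) (hθ1 _) (hθ' _)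
  rw [setIntegral_gradInner_add_mul_frameLaplacian hU hK hKU htest htest0 hw,
    integral_sub (henergy.const_mul (1 / 2)) herror, integral_const_mul] at hle
  exact ⟨henergy, by linarith⟩

lemma ae_fderiv_eq_zero_of_apply_eq_zero (hU : IsOpen U) (hw : DifferentiableOn ℝ w U) :
    ∀ᵐ x ∂μ.restrict U, w x = 0 → fderiv ℝ w x = 0 := by
  rcases subsingleton_or_nontrivial E with _ | _
  · exact Eventually.of_forall fun x _ => Subsingleton.elim _ _
  obtain ⟨d, hd⟩ := exists_ne (0 : E)
  have hmeas : MeasurableSet (U ∩ w ⁻¹' {0}) := by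
    obtain ⟨F, hF, hFU⟩ := continuousOn_iff_isClosed.1 hw.continuousOn {0} isClosed_singleton
    rw [inter_comm, hFU]
    exact hF.measurableSet.inter hU.measurableSet
  have hflat : ApproximatesLinearOn (fun x => w x • d) (0 : E →L[ℝ] E) (U ∩ w ⁻¹' {0}) 0 :=
    fun x hx y hy => by simp [show w x = 0 from hx.2, show w y = 0 from hy.2]
  have hderiv := hflat.norm_fderiv_sub_le μ hmeas (fun x => (fderiv ℝ w x).smulRight d)
    fun x hx => ((hw.differentiableAt (hU.mem_nhds hx.1)).hasFDerivAt.smul_const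
      d).hasFDerivWithinAt
  rw [ae_restrict_iff' hmeas] at hderiv
  rw [ae_restrict_iff' hU.measurableSet]
  filter_upwards [hderiv] with x hx hxU hx0
  simpa [hd] using hx ⟨hxU, hx0⟩

/-- The limit `θ(w) → 1_{w ≠ 0}` loses nothing because `∇w = 0` almost everywhere on `{w = 0}`. -/
theorem caccioppoli (hU : IsOpen U) (hw : ContDiffOn ℝ 2 w U) (hη : ContDiffOn ℝ 1 η U)
    (hsupp : ∀ δ > 0, ∃ K, IsCompact K ∧ K ⊆ U ∧ ∀ x ∈ U \ K, η x = 0 ∨ |w x| ≤ δ)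
    (herror : IntegrableOn (cutoffError e w η) U μ) :
    IntegrableOn (fun x => η x ^ 2 * gradInner e w w x) U μ ∧
      ∫ x in U, η x ^ 2 * gradInner e w w x ∂μ ≤
        2 * ∫ x in U, cutoffError e w η x ∂μ := by
  choose K hK hKU hKsupp using fun N : ℕ => hsupp (1 / ((N : ℝ) + 1)) (by positivity)
  have hlevel (N : ℕ) := setIntegral_comp_mul_sq_mul_gradInner_le hU (hK N) (hKU N) hw hη
    (contDiff_levelCutoff (1 / ((N : ℝ) + 1))) (levelCutoff_nonneg _) (levelCutoff_le_one _)
    (mul_deriv_levelCutoff_nonneg _) (fun x hx => (hKsupp N x hx).imp_right levelCutoff_eq_zero)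
    herror
  refine integrable_and_integral_le_of_tendsto_ae (fun N => (hlevel N).1)
    (fun N => Eventually.of_forall fun x => ?_) ?_ fun N => (hlevel N).2
  · exact mul_nonneg (levelCutoff_nonneg _ _)
      (mul_nonneg (sq_nonneg _) (gradInner_self_nonneg e w x))
  · filter_upwards [ae_fderiv_eq_zero_of_apply_eq_zero hU (hw.differentiableOn two_ne_zero)]
      with x hx
    by_cases hwx : w x = 0
    · simp [gradInner, hx hwx]
    · simpa using (tendsto_levelCutoff_one_div hwx).mul_const (η x ^ 2 * gradInner e w w x)

theorem caccioppoli_of_cutoff {V W : Set E} {B d : ℝ} (hU : IsOpen U) (hV : MeasurableSet V)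
    (hVU : V ⊆ U) (hW : MeasurableSet W) (hWU : W ⊆ U) (hw : ContDiffOn ℝ 2 w U)
    (hη : ContDiffOn ℝ 1 η U) (hη0 : ∀ x, 0 ≤ η x) (hη1 : ∀ x, η x ≤ 1)
    (hηV : ∀ x ∈ V, η x = 1) (hηW : ∀ x ∈ U \ W, η x = 0)
    (hgrad : ∀ x ∈ W, gradInner e η η x ≤ B) (hd : 0 < d)
    (hsupp : ∀ δ > 0, ∃ K, IsCompact K ∧ K ⊆ U ∧ ∀ x ∈ U \ K, η x = 0 ∨ |w x| ≤ δ)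
    (hw2 : IntegrableOn (fun x => w x ^ 2) W μ)
    (hlap2 : IntegrableOn (fun x => frameLaplacian e w x ^ 2) W μ) :
    IntegrableOn (gradInner e w w) V μ ∧
      ∫ x in V, gradInner e w w x ∂μ ≤
        (4 * B + 1 / d ^ 2) * ∫ x in W, w x ^ 2 ∂μ +
          d ^ 2 * ∫ x in W, frameLaplacian e w x ^ 2 ∂μ := by
  have herror_le : ∀ x ∈ W, 2 * cutoffError e w η x ≤
      (4 * B + 1 / d ^ 2) * w x ^ 2 + d ^ 2 * frameLaplacian e w x ^ 2 := fun x hx =>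
    two_mul_cutoffError_le hd (hη0 x) (hη1 x) (hgrad x hx)
  have hbound : IntegrableOn (fun x => (4 * B + 1 / d ^ 2) * w x ^ 2 +
      d ^ 2 * frameLaplacian e w x ^ 2) W μ := (hw2.const_mul _).add (hlap2.const_mul _)
  have herrorW : IntegrableOn (cutoffError e w η) W μ := by
    refine hbound.mono' (((continuousOn_cutoffError hU hw hη).mono hWU).aestronglyMeasurable hW)
      (ae_restrict_of_forall_mem hW fun x hx => ?_)
    have hnonneg := cutoffError_nonneg e w η x
    rw [Real.norm_of_nonneg hnonneg]
    linarith [herror_le x hx]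
  have herror0 : ∀ x ∈ U \ W, cutoffError e w η x = 0 := fun x hx =>
    cutoffError_eq_zero (Eventually.of_forall fun y => (hηW x hx).trans_le (hη0 y)) (hηW x hx)
  obtain ⟨hint, hle⟩ := caccioppoli (e := e) (μ := μ) hU hw hη hsupp
    (herrorW.of_forall_sdiff_eq_zero hU.measurableSet herror0)
  have hone : EqOn (fun x => η x ^ 2 * gradInner e w w x) (gradInner e w w) V := fun x hx => by
    simp [hηV x hx]
  refine ⟨(hint.mono_set hVU).congr_fun hone hV, ?_⟩
  calc ∫ x in V, gradInner e w w x ∂μ = ∫ x in V, η x ^ 2 * gradInner e w w x ∂μ :=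
        (setIntegral_congr_fun hV hone).symm
    _ ≤ ∫ x in U, η x ^ 2 * gradInner e w w x ∂μ :=
        setIntegral_mono_set hint (Eventually.of_forall fun x =>
          mul_nonneg (sq_nonneg _) (gradInner_self_nonneg e w x)) hVU.eventuallyLE
    _ ≤ 2 * ∫ x in U, cutoffError e w η x ∂μ := hle
    _ = ∫ x in W, 2 * cutoffError e w η x ∂μ := by
        rw [setIntegral_eq_of_subset_of_forall_sdiff_eq_zero hU.measurableSet hWU herror0,
          integral_const_mul]
    _ ≤ ∫ x in W, ((4 * B + 1 / d ^ 2) * w x ^ 2 + d ^ 2 * frameLaplacian e w x ^ 2) ∂μ :=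
        setIntegral_mono_on (herrorW.const_mul 2) hbound hW herror_le
    _ = (4 * B + 1 / d ^ 2) * ∫ x in W, w x ^ 2 ∂μ +
          d ^ 2 * ∫ x in W, frameLaplacian e w x ^ 2 ∂μ := by
        rw [integral_add (hw2.const_mul _) (hlap2.const_mul _), integral_const_mul,
          integral_const_mul]

end Frame

/-! ### Regions between two graphs -/

section RegionBetween

variable {X : Type*} {f g : X → ℝ} {s : Set X}

lemma isOpen_regionBetween [TopologicalSpace X] (hs : IsOpen s) (hf : ContinuousOn f s)
    (hg : ContinuousOn g s) : IsOpen (regionBetween f g s) := by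
  refine isOpen_iff_mem_nhds.2 fun x ⟨hxs, hfx, hgx⟩ => ?_
  have hfc : ContinuousAt (fun y : X × ℝ => f y.1) x :=
    (hf.continuousAt (hs.mem_nhds hxs)).comp continuousAt_fst
  have hgc : ContinuousAt (fun y : X × ℝ => g y.1) x :=
    (hg.continuousAt (hs.mem_nhds hxs)).comp continuousAt_fst
  filter_upwards [continuousAt_fst.preimage_mem_nhds (hs.mem_nhds hxs),
    hfc.eventually_lt continuousAt_snd hfx, continuousAt_snd.eventually_lt hgc hgx]
    with y hys hfy hgy using ⟨hys, hfy, hgy⟩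

lemma snd_mem_Icc_of_mem_closure_regionBetween [TopologicalSpace X] (hs : IsOpen s)
    (hf : ContinuousOn f s) (hg : ContinuousOn g s) {x : X × ℝ}
    (hx : x ∈ closure (regionBetween f g s)) (hxs : x.1 ∈ s) : x.2 ∈ Icc (f x.1) (g x.1) := by
  have hfc : ContinuousAt (fun y : X × ℝ => f y.1) x :=
    (hf.continuousAt (hs.mem_nhds hxs)).comp continuousAt_fst
  have hgc : ContinuousAt (fun y : X × ℝ => g y.1) x :=
    (hg.continuousAt (hs.mem_nhds hxs)).comp continuousAt_fst
  have hne := mem_closure_iff_nhdsWithin_neBot.1 hx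
  constructor
  · refine le_of_tendsto_of_tendsto (b := 𝓝[regionBetween f g s] x)
      (hfc.tendsto.mono_left nhdsWithin_le_nhds)
      (continuousAt_snd.tendsto.mono_left nhdsWithin_le_nhds) ?_
    filter_upwards [self_mem_nhdsWithin] with y hy using hy.2.1.le
  · refine le_of_tendsto_of_tendsto (b := 𝓝[regionBetween f g s] x)
      (continuousAt_snd.tendsto.mono_left nhdsWithin_le_nhds)
      (hgc.tendsto.mono_left nhdsWithin_le_nhds) ?_
    filter_upwards [self_mem_nhdsWithin] with y hy using hy.2.2.le

lemma isBounded_regionBetween [PseudoMetricSpace X] (hs : Bornology.IsBounded s)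
    (hf : BddBelow (f '' s)) (hg : BddAbove (g '' s)) :
    Bornology.IsBounded (regionBetween f g s) := by
  obtain ⟨m, hm⟩ := hf
  obtain ⟨M, hM⟩ := hg
  exact (hs.prod (isBounded_Icc m M)).subset fun x hx =>
    ⟨hx.1, (hm (mem_image_of_mem f hx.1)).trans hx.2.1.le,
      hx.2.2.le.trans (hM (mem_image_of_mem g hx.1))⟩

lemma exists_isCompact_subset_regionBetween [PseudoMetricSpace X] [ProperSpace X] {F : Set X}
    {w : X × ℝ → ℝ} (hs : IsOpen s) (hbdd : Bornology.IsBounded (regionBetween f g s))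
    (hf : ContinuousOn f s) (hg : ContinuousOn g s)
    (hw : ContinuousOn w (closure (regionBetween f g s))) (hwf : ∀ y ∈ s, w (y, f y) = 0)
    (hwg : ∀ y ∈ s, w (y, g y) = 0) (hF : IsClosed F) (hFs : F ⊆ s) {δ : ℝ} (hδ : 0 < δ) :
    ∃ K, IsCompact K ∧ K ⊆ regionBetween f g s ∧
      ∀ x ∈ regionBetween f g s \ K, x.1 ∉ F ∨ |w x| ≤ δ := by
  refine ⟨closure (regionBetween f g s) ∩ (fun x => |w x|) ⁻¹' Ici δ ∩ Prod.fst ⁻¹' F,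
    ?_, ?_, ?_⟩
  · exact hbdd.isCompact_closure.of_isClosed_subset
      ((hw.abs.preimage_isClosed_of_isClosed isClosed_closure isClosed_Ici).inter
        (hF.preimage continuous_fst)) fun x hx => hx.1.1
  · rintro ⟨y, τ⟩ ⟨⟨hx, hwx⟩, hyF⟩
    have hys : y ∈ s := hFs hyF
    have hw0 : w (y, τ) ≠ 0 := abs_pos.1 (hδ.trans_le hwx)
    obtain ⟨hfτ, hτg⟩ : f y ≤ τ ∧ τ ≤ g y :=
      snd_mem_Icc_of_mem_closure_regionBetween hs hf hg hx hys
    exact ⟨hys, hfτ.lt_of_ne fun h => hw0 (h ▸ hwf y hys),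
      hτg.lt_of_ne fun h => hw0 (h ▸ hwg y hys)⟩
  · rintro x ⟨hx, hxK⟩
    by_contra! hlarge
    exact hxK ⟨⟨subset_closure hx, hlarge.2.le⟩, hlarge.1⟩

end RegionBetween

/-! ### The narrow region -/

lemma norm_dir_le {n : ℕ} (i : Fin n) : ‖dir n i‖ ≤ 1 := by
  unfold dir
  split_ifs <;> simp [Prod.norm_def]

lemma eq_sum_smul_dir {m : ℕ} (v : Efull (m + 1)) :
    v = ∑ i : Fin m, v.1 i • dir (m + 1) i.castSucc + v.2 • dir (m + 1) (Fin.last m) := by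
  ext j
  · simp [dir, Prod.fst_sum, Pi.single_apply]
  · simp [dir, Prod.snd_sum]

lemma norm_le_sum_abs_apply_dir {n : ℕ} (hn : n ≠ 0) (L : Efull n →L[ℝ] ℝ) :
    ‖L‖ ≤ ∑ i, |L (dir n i)| := by
  obtain ⟨m, rfl⟩ := Nat.exists_eq_succ_of_ne_zero hn
  refine L.opNorm_le_bound (Finset.sum_nonneg fun _ _ => abs_nonneg _) fun v => ?_
  have hhor (i : Fin m) : |v.1 i * L (dir (m + 1) i.castSucc)| ≤
      |L (dir (m + 1) i.castSucc)| * ‖v‖ := by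
    rw [abs_mul, mul_comm]
    gcongr
    exact (PiLp.norm_apply_le v.1 i).trans (norm_fst_le v)
  have hvert : |v.2 * L (dir (m + 1) (Fin.last m))| ≤ |L (dir (m + 1) (Fin.last m))| * ‖v‖ := by
    rw [abs_mul, mul_comm]
    gcongr
    exact norm_snd_le v
  calc ‖L v‖ = |∑ i : Fin m, v.1 i * L (dir (m + 1) i.castSucc) +
        v.2 * L (dir (m + 1) (Fin.last m))| := by
        conv_lhs => rw [eq_sum_smul_dir v]
        simp
    _ ≤ ∑ i : Fin m, |L (dir (m + 1) i.castSucc)| * ‖v‖ +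
          |L (dir (m + 1) (Fin.last m))| * ‖v‖ :=
        (abs_add_le _ _).trans (add_le_add ((Finset.abs_sum_le_sum_abs _ _).trans
          (Finset.sum_le_sum fun i _ => hhor i)) hvert)
    _ = (∑ i, |L (dir (m + 1) i)|) * ‖v‖ := by
        rw [Fin.sum_univ_castSucc, add_mul, Finset.sum_mul]

lemma norm_fderiv_sq_le_mul_gradInner {n : ℕ} (hn : n ≠ 0) (w : Efull n → ℝ) (x : Efull n) :
    ‖fderiv ℝ w x‖ ^ 2 ≤ n * gradInner (dir n) w w x := by
  calc ‖fderiv ℝ w x‖ ^ 2 ≤ (∑ i, |fderiv ℝ w x (dir n i)|) ^ 2 := by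
        gcongr
        exact norm_le_sum_abs_apply_dir hn _
    _ ≤ n * ∑ i, |fderiv ℝ w x (dir n i)| ^ 2 := by
        simpa using sq_sum_le_card_mul_sum_sq (s := Finset.univ)
          (f := fun i => |fderiv ℝ w x (dir n i)|)
    _ = n * gradInner (dir n) w w x := by simp [gradInner, sq]

lemma integrableOn_norm_fderiv_sq_and_setIntegral_le {n : ℕ} (hn : n ≠ 0) {U V : Set (Efull n)}
    {w : Efull n → ℝ} (hU : IsOpen U) (hw : ContDiffOn ℝ 1 w U) (hV : MeasurableSet V)
    (hVU : V ⊆ U) (hint : IntegrableOn (gradInner (dir n) w w) V) :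
    IntegrableOn (fun x => ‖fderiv ℝ w x‖ ^ 2) V ∧
      ∫ x in V, ‖fderiv ℝ w x‖ ^ 2 ≤ n * ∫ x in V, gradInner (dir n) w w x := by
  have hcont : ContinuousOn (fun x => ‖fderiv ℝ w x‖ ^ 2) V :=
    ((hw.continuousOn_fderiv_of_isOpen hU le_rfl).norm.pow 2).mono hVU
  have hgrad : IntegrableOn (fun x => ‖fderiv ℝ w x‖ ^ 2) V :=
    (hint.const_mul n).mono' (hcont.aestronglyMeasurable hV) <| Eventually.of_forall fun x => by
      rw [Real.norm_of_nonneg (sq_nonneg _)]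
      exact norm_fderiv_sq_le_mul_gradInner hn w x
  refine ⟨hgrad, ?_⟩
  rw [← integral_const_mul]
  exact integral_mono hgrad (hint.const_mul n) (norm_fderiv_sq_le_mul_gradInner hn w)

instance isAddHaarMeasure_volume_Efull (n : ℕ) :
    (volume : Measure (Efull n)).IsAddHaarMeasure := by
  rw [Measure.volume_eq_prod]
  infer_instance

section OmegaHat

variable {n : ℕ} {ε : ℝ} {h1 h2 : Ep n → ℝ}

lemma Omega_eq_regionBetween (n : ℕ) (ε : ℝ) (h1 h2 : Ep n → ℝ) (r : ℝ) :
    Omega n ε h1 h2 r =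
      regionBetween (fun y => -ε / 2 + h2 y) (fun y => ε / 2 + h1 y) (ball 0 r) := by
  ext x
  simp [Omega, regionBetween]

lemma OmegaHat_eq_Omega_one_inter {x₀ : Efull n} {r : ℝ} (hr : ‖x₀.1‖ + r ≤ 1 / 2) :
    OmegaHat n ε h1 h2 x₀ r = Omega n ε h1 h2 1 ∩ Prod.fst ⁻¹' ball x₀.1 r := by
  ext x
  simp only [OmegaHat, Omega, mem_ofPred_eq, mem_inter_iff, Set.mem_preimage, mem_ball_iff_norm]
  constructor
  · rintro ⟨⟨hx, hgraphs⟩, hxr⟩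
    exact ⟨⟨by linarith, hgraphs⟩, hxr⟩
  · rintro ⟨⟨-, hgraphs⟩, hxr⟩
    exact ⟨⟨by linarith [norm_le_norm_add_norm_sub' x.1 x₀.1], hgraphs⟩, hxr⟩

lemma OmegaHat_subset_Omega_one {x₀ : Efull n} {r : ℝ} (hr : ‖x₀.1‖ + r ≤ 1 / 2) :
    OmegaHat n ε h1 h2 x₀ r ⊆ Omega n ε h1 h2 1 :=
  (OmegaHat_eq_Omega_one_inter hr).trans_subset inter_subset_left

lemma isOpen_Omega_one (hh1 : ContinuousOn h1 (closedBall 0 1))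
    (hh2 : ContinuousOn h2 (closedBall 0 1)) : IsOpen (Omega n ε h1 h2 1) := by
  rw [Omega_eq_regionBetween]
  exact isOpen_regionBetween isOpen_ball
    (continuousOn_const.add (hh2.mono ball_subset_closedBall))
    (continuousOn_const.add (hh1.mono ball_subset_closedBall))

lemma isOpen_OmegaHat (hh1 : ContinuousOn h1 (closedBall 0 1))
    (hh2 : ContinuousOn h2 (closedBall 0 1)) {x₀ : Efull n} {r : ℝ} (hr : ‖x₀.1‖ + r ≤ 1 / 2) :
    IsOpen (OmegaHat n ε h1 h2 x₀ r) := by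
  rw [OmegaHat_eq_Omega_one_inter hr]
  exact (isOpen_Omega_one hh1 hh2).inter (isOpen_ball.preimage continuous_fst)

lemma isBounded_Omega_one (hh1 : ContinuousOn h1 (closedBall 0 1))
    (hh2 : ContinuousOn h2 (closedBall 0 1)) : Bornology.IsBounded (Omega n ε h1 h2 1) := by
  have hball := isCompact_closedBall (0 : Ep n) 1
  rw [Omega_eq_regionBetween]
  exact isBounded_regionBetween isBounded_ball
    ((hball.bddBelow_image (continuousOn_const.add hh2)).mono (image_mono ball_subset_closedBall))
    ((hball.bddAbove_image (continuousOn_const.add hh1)).mono (image_mono ball_subset_closedBall))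

lemma exists_isCompact_subset_Omega_one {w : Efull n → ℝ} {F : Set (Ep n)}
    (hh1 : ContinuousOn h1 (closedBall 0 1)) (hh2 : ContinuousOn h2 (closedBall 0 1))
    (hw : ContinuousOn w (closure (Omega n ε h1 h2 1)))
    (hw0 : ∀ x ∈ Gammap n ε h1 1 ∪ Gammam n ε h2 1, w x = 0) (hF : IsClosed F)
    (hF1 : F ⊆ ball 0 1) {δ : ℝ} (hδ : 0 < δ) :
    ∃ K, IsCompact K ∧ K ⊆ Omega n ε h1 h2 1 ∧
      ∀ x ∈ Omega n ε h1 h2 1 \ K, x.1 ∉ F ∨ |w x| ≤ δ := by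
  have hbdd := isBounded_Omega_one (ε := ε) hh1 hh2
  rw [Omega_eq_regionBetween] at hw hbdd ⊢
  exact exists_isCompact_subset_regionBetween isOpen_ball hbdd
    (continuousOn_const.add (hh2.mono ball_subset_closedBall))
    (continuousOn_const.add (hh1.mono ball_subset_closedBall)) hw
    (fun y hy => hw0 _ (Or.inr ⟨(mem_ball_zero_iff.1 hy).le, rfl⟩))
    (fun y hy => hw0 _ (Or.inl ⟨(mem_ball_zero_iff.1 hy).le, rfl⟩)) hF hF1 hδ

lemma gradInner_radialCutoff_fst_le {M : ℝ} (hM : ∀ x, |deriv Real.smoothTransition x| ≤ M)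
    {a : Ep n} {t s : ℝ} (ht : 0 ≤ t) (hts : t < s) (x : Efull n) :
    gradInner (dir n) (fun y => radialCutoff a t s y.1) (fun y => radialCutoff a t s y.1) x ≤
      n * (2 * M / (s - t)) ^ 2 := by
  have hnorm : ‖fderiv ℝ (fun y : Efull n => radialCutoff a t s y.1) x‖ ≤ 2 * M / (s - t) := by
    have hcutoff : DifferentiableAt ℝ (radialCutoff a t s) x.1 :=
      contDiff_radialCutoff.differentiable one_ne_zero x.1
    calc ‖fderiv ℝ (fun y : Efull n => radialCutoff a t s y.1) x‖
        = ‖(fderiv ℝ (radialCutoff a t s) x.1).comp (ContinuousLinearMap.fst ℝ (Ep n) ℝ)‖ := by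
          rw [← fderiv_fst (p := x)]
          exact congrArg norm (fderiv_comp x hcutoff differentiableAt_fst)
      _ ≤ ‖fderiv ℝ (radialCutoff a t s) x.1‖ * 1 :=
          (ContinuousLinearMap.opNorm_comp_le _ _).trans
            (by gcongr; exact ContinuousLinearMap.norm_fst_le _ _ _)
      _ ≤ 2 * M / (s - t) := by
          rw [mul_one]; exact norm_fderiv_radialCutoff_le hM ht hts x.1
  calc _ ≤ Fintype.card (Fin n) * ‖fderiv ℝ (fun y : Efull n => radialCutoff a t s y.1) x‖ ^ 2 :=
        gradInner_self_le_card_mul_norm_fderiv_sq norm_dir_le _ x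
    _ ≤ n * (2 * M / (s - t)) ^ 2 := by
        rw [Fintype.card_fin]
        gcongr

theorem caccioppoli_OmegaHat {M : ℝ} (hM : ∀ x, |deriv Real.smoothTransition x| ≤ M)
    {w : Efull n → ℝ} (hh1 : ContinuousOn h1 (closedBall 0 1))
    (hh2 : ContinuousOn h2 (closedBall 0 1)) (hw : ContDiffOn ℝ 2 w (Omega n ε h1 h2 1))
    (hwc : ContinuousOn w (closure (Omega n ε h1 h2 1)))
    (hw0 : ∀ x ∈ Gammap n ε h1 1 ∪ Gammam n ε h2 1, w x = 0) {x₀ : Efull n} {t s : ℝ}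
    (ht : 0 ≤ t) (hts : t < s) (hs : ‖x₀.1‖ + s ≤ 1 / 2)
    (hw2 : IntegrableOn (fun x => w x ^ 2) (OmegaHat n ε h1 h2 x₀ s))
    (hlap2 : IntegrableOn (fun x => lapl n w x ^ 2) (OmegaHat n ε h1 h2 x₀ s)) :
    IntegrableOn (gradInner (dir n) w w) (OmegaHat n ε h1 h2 x₀ t) ∧
      ∫ x in OmegaHat n ε h1 h2 x₀ t, gradInner (dir n) w w x ≤
        (16 * n * M ^ 2 + 1) / (s - t) ^ 2 * (∫ x in OmegaHat n ε h1 h2 x₀ s, w x ^ 2) +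
          (s - t) ^ 2 * ∫ x in OmegaHat n ε h1 h2 x₀ s, lapl n w x ^ 2 := by
  have ht' : ‖x₀.1‖ + t ≤ 1 / 2 := by linarith
  have hball : closedBall x₀.1 s ⊆ ball 0 1 := fun y hy => by
    rw [mem_ball_zero_iff]
    linarith [norm_le_norm_add_norm_sub' y x₀.1, mem_closedBall_iff_norm.1 hy]
  have hcutoff := caccioppoli_of_cutoff (μ := volume) (e := dir n)
    (η := fun x : Efull n => radialCutoff x₀.1 t s x.1) (B := n * (2 * M / (s - t)) ^ 2)
    (isOpen_Omega_one hh1 hh2) (isOpen_OmegaHat hh1 hh2 ht').measurableSet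
    (OmegaHat_subset_Omega_one ht') (isOpen_OmegaHat hh1 hh2 hs).measurableSet
    (OmegaHat_subset_Omega_one hs) hw (contDiff_radialCutoff.comp contDiff_fst).contDiffOn
    (fun x => radialCutoff_nonneg x.1) (fun x => radialCutoff_le_one x.1)
    (fun x hx => radialCutoff_eq_one ht hts hx.2.le)
    (fun x hx => radialCutoff_eq_zero ht hts <| by
      rw [OmegaHat_eq_Omega_one_inter hs, sdiff_self_inter] at hx
      simpa [dist_eq_norm] using hx.2)
    (fun x _ => gradInner_radialCutoff_fst_le hM ht hts x) (sub_pos.2 hts)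
    (fun δ hδ => by
      obtain ⟨K, hK, hKΩ, hKw⟩ := exists_isCompact_subset_Omega_one hh1 hh2 hwc hw0
        isClosed_closedBall hball hδ
      refine ⟨K, hK, hKΩ, fun x hx => (hKw x hx).imp_left fun hxs => ?_⟩
      rw [mem_closedBall_iff_norm, not_le] at hxs
      exact radialCutoff_eq_zero ht hts hxs.le)
    hw2 hlap2
  have hconst : 4 * (n * (2 * M / (s - t)) ^ 2) + 1 / (s - t) ^ 2 =
      (16 * n * M ^ 2 + 1) / (s - t) ^ 2 := by
    rw [div_pow]
    ring
  rwa [hconst] at hcutoff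

end OmegaHat

theorem stmt12_general (n : ℕ) (hn : n ≠ 0) :
    ∃ C : ℝ, 0 < C ∧
      ∀ (ε : ℝ) (h1 h2 : Ep n → ℝ),
        ContinuousOn h1 (closedBall 0 1) → ContinuousOn h2 (closedBall 0 1) →
      ∀ w f : Efull n → ℝ,
        ContDiffOn ℝ 2 w (Omega n ε h1 h2 1) →
        ContinuousOn w (closure (Omega n ε h1 h2 1)) →
        (∀ x ∈ Gammap n ε h1 1 ∪ Gammam n ε h2 1, w x = 0) →
        (∀ x ∈ Omega n ε h1 h2 1, lapl n w x = -f x) →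
      ∀ (x₀ : Efull n) (t s : ℝ), 0 ≤ t → t < s → ‖x₀.1‖ + s ≤ 1 / 2 →
        IntegrableOn (fun x => ‖w x‖ ^ 2) (OmegaHat n ε h1 h2 x₀ s) →
        IntegrableOn (fun x => ‖f x‖ ^ 2) (OmegaHat n ε h1 h2 x₀ s) →
        IntegrableOn (fun x => ‖fderiv ℝ w x‖ ^ 2) (OmegaHat n ε h1 h2 x₀ t) ∧
          (∫ x in OmegaHat n ε h1 h2 x₀ t, ‖fderiv ℝ w x‖ ^ 2) ≤
            C / (s - t) ^ 2 * (∫ x in OmegaHat n ε h1 h2 x₀ s, ‖w x‖ ^ 2) +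
            C * (s - t) ^ 2 * ∫ x in OmegaHat n ε h1 h2 x₀ s, ‖f x‖ ^ 2 := by
  obtain ⟨M, hM⟩ := exists_abs_deriv_smoothTransition_le
  refine ⟨n * (16 * n * M ^ 2 + 1),
    mul_pos (Nat.cast_pos.2 (Nat.pos_of_ne_zero hn)) (by positivity),
    fun ε h1 h2 hh1 hh2 w f hw hwc hw0 heq x₀ t s ht hts hs hw2 hf2 => ?_⟩
  have ht' : ‖x₀.1‖ + t ≤ 1 / 2 := by linarith
  have hmeas_t := (isOpen_OmegaHat (ε := ε) hh1 hh2 ht').measurableSet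
  have hmeas_s := (isOpen_OmegaHat (ε := ε) hh1 hh2 hs).measurableSet
  have hf_eq : EqOn (fun x => ‖f x‖ ^ 2) (fun x => lapl n w x ^ 2) (OmegaHat n ε h1 h2 x₀ s) :=
    fun x hx => by simp [heq x (OmegaHat_subset_Omega_one hs hx)]
  simp only [Real.norm_eq_abs (w _), sq_abs] at hw2 ⊢
  rw [setIntegral_congr_fun hmeas_s hf_eq]
  obtain ⟨hint, hle⟩ := caccioppoli_OmegaHat hM hh1 hh2 hw hwc hw0 ht hts hs hw2
    (hf2.congr_fun hf_eq hmeas_s)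
  obtain ⟨hgrad, hgrad_le⟩ := integrableOn_norm_fderiv_sq_and_setIntegral_le hn
    (isOpen_Omega_one hh1 hh2) (hw.of_le one_le_two) hmeas_t (OmegaHat_subset_Omega_one ht') hint
  refine ⟨hgrad, ?_⟩
  set W := ∫ x in OmegaHat n ε h1 h2 x₀ s, w x ^ 2
  set L := ∫ x in OmegaHat n ε h1 h2 x₀ s, lapl n w x ^ 2
  calc (∫ x in OmegaHat n ε h1 h2 x₀ t, ‖fderiv ℝ w x‖ ^ 2)
      ≤ n * ((16 * n * M ^ 2 + 1) / (s - t) ^ 2 * W + 1 * (s - t) ^ 2 * L) :=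
        hgrad_le.trans (by rw [one_mul]; gcongr)
    _ ≤ n * ((16 * n * M ^ 2 + 1) / (s - t) ^ 2 * W + (16 * n * M ^ 2 + 1) * (s - t) ^ 2 * L) := by
        gcongr
        exact le_add_of_nonneg_left (by positivity)
    _ = n * (16 * n * M ^ 2 + 1) / (s - t) ^ 2 * W +
          n * (16 * n * M ^ 2 + 1) * (s - t) ^ 2 * L := by ring

theorem stmt12 (n : ℕ) (hn : 2 ≤ n) :
    ∃ C : ℝ, 0 < C ∧
      ∀ κ0 κ1 : ℝ, 0 < κ0 → 0 < κ1 →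
      ∀ ε ∈ Set.Ioo (0:ℝ) 1, ∀ h1 h2 : Ep n → ℝ,
        HGeom n ε κ0 κ1 h1 h2 →
      ∀ φ ψ : Ep n → ℝ,
        ContDiffOn ℝ 2 φ (closedBall 0 1) → ContDiffOn ℝ 2 ψ (closedBall 0 1) →
      ∀ w : Efull n → ℝ,
        ContDiffOn ℝ 2 w (Omega n ε h1 h2 1) →
        ContinuousOn w (closure (Omega n ε h1 h2 1)) →
        (∀ x ∈ Gammap n ε h1 1 ∪ Gammam n ε h2 1, w x = 0) →
        (∀ x ∈ Omega n ε h1 h2 1, lapl n w x = - lapl n (util n ε h1 h2 φ ψ) x) →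
        IntegrableOn (fun x => ‖w x‖^2) (Omega n ε h1 h2 1) →
        IntegrableOn (fun x => ‖fderiv ℝ w x‖^2) (Omega n ε h1 h2 1) →
        IntegrableOn (fun x => ‖lapl n (util n ε h1 h2 φ ψ) x‖^2) (Omega n ε h1 h2 1) →
      ∀ x₀ ∈ Omega n ε h1 h2 (1/2), ∀ t s : ℝ, 0 < t → t < s → ‖x₀.1‖ + s < 1/2 →
        (∫ x in OmegaHat n ε h1 h2 x₀ t, ‖fderiv ℝ w x‖^2) ≤
          C / (s - t)^2 * (∫ x in OmegaHat n ε h1 h2 x₀ s, ‖w x‖^2) +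
          C * (s - t)^2 * ∫ x in OmegaHat n ε h1 h2 x₀ s, ‖lapl n (util n ε h1 h2 φ ψ) x‖^2 := by
  obtain ⟨C, hC, hcaccioppoli⟩ := stmt12_general n (by omega)
  refine ⟨C, hC, fun κ0 κ1 _ _ ε _ h1 h2 hgeom φ ψ _ _ w hw hwc hw0 heq hw2 _ hf2 x₀ _ t s ht hts
    hs => (hcaccioppoli ε h1 h2 hgeom.1.continuousOn hgeom.2.1.continuousOn w _ hw hwc hw0 heq x₀ t
    s ht.le hts hs.le (hw2.mono_set ?_) (hf2.mono_set ?_)).2⟩ <;>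
  exact OmegaHat_subset_Omega_one hs.le
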